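/- Let u(z) = ∫_𝔻 log(|z−ζ|/|1−z·conj(ζ)|) dμ(ζ), where μ is a positive Borel measure on 𝔻 with ∫_𝔻 (1−|ζ|) dμ(ζ) < ∞. Let α ∈ [0,1) and p ∈ (1,∞) satisfy α + 1/p < 1. Suppose the support of μ is contained in a finite union of Stolz angles with vertices on ∂𝔻, i.e. there exist finitely many points ζ₁,…,ζ_N ∈ ∂𝔻 and a constant c ≥ 1 such that supp μ ⊆ ⋃_{j=1}^N {z ∈ 𝔻 : |ζ_j − z| ≤ c(1−|z|)}. Then m_p(r,u) = O((1−r)^{−α}) as r ↑ 1 if and only if n(r,u) := μ(closed disc of radius r centered at 0) = O((1−r)^{−α−1/p}) as r ↑ 1. -/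

import Mathlib

open MeasureTheory Complex

/-- The `p`-th integral mean `m_p(r,u) = ((1/2π) ∫₀^{2π} |u(re^{iθ})|^p dθ)^{1/p}`. -/
noncomputable def mpMean (p r : ℝ) (u : ℂ → ℝ) : ℝ :=
  ((1 / (2 * Real.pi)) *
      ∫ θ in (0 : ℝ)..(2 * Real.pi),
        |u ((r : ℂ) * Complex.exp (θ * Complex.I))| ^ p) ^ (1 / p)

open Set Filter Asymptotics Metric
open scoped ENNReal Topology Real ComplexConjugate

/-!
Up to sign, `u` is the superposition over `μ` of the Green functions `greenKernel · ζ`. With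
`d = 1 - r` and `δ = 1 - |ζ|`, the Green function at angle `t` from `ζ` is at most a constant times
`(min d δ / max d δ) * logProfile (t / (4 π max d δ))`, so its `L^p` norm on the circle of radius
`r` is `O(d ^ (1/p - 1) * min d δ)`. By Minkowski's inequality for integrals, the mean of `u` is
`O(d ^ (1/p - 1) * ∫ min d δ dμ)`, and `∫ min d δ dμ = ∫₀^d μ{δ ≥ s} ds` is controlled by the
counting function; this half holds for every `μ`.

Conversely, on the arc of length `d` at the vertex of a Stolz angle, the potential is bounded below
by a constant times the mass of the part of the angle where `2 d ≤ δ ≤ 4 d`. A bound on the mean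
thus bounds the mass of each dyadic layer, and the layers sum geometrically to the counting
function.
-/

section Minkowski

variable {α β : Type*} [MeasurableSpace α] [MeasurableSpace β]

theorem lintegral_le_lintegral_rpow_mul_rpow {ν : Measure β} {p : ℝ} (hp : 1 ≤ p)
    {f w : β → ℝ≥0∞} (hf : Measurable f) (hw : Measurable w) (hw_top : ∀ᵐ b ∂ν, w b ≠ ∞)
    (hf_zero : ∀ᵐ b ∂ν, w b = 0 → f b = 0) :
    ∫⁻ b, f b ∂ν ≤
      (∫⁻ b, f b ^ p * w b ^ (1 - p) ∂ν) ^ (1 / p) * (∫⁻ b, w b ∂ν) ^ (1 - 1 / p) := by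
  have hp_pos : 0 < p := by positivity
  have hp_inv : 1 / p ≤ 1 := (div_le_one hp_pos).2 hp
  have hsplit : ∀ᵐ b ∂ν, f b = (f b ^ p * w b ^ (1 - p)) ^ (1 / p) * w b ^ (1 - 1 / p) := by
    filter_upwards [hw_top, hf_zero] with b htop hzero
    rcases eq_or_ne (w b) 0 with h | h
    · simp [hzero h, hp_pos]
    · rw [ENNReal.mul_rpow_of_nonneg _ _ (by positivity), ← ENNReal.rpow_mul,
        ← ENNReal.rpow_mul, mul_one_div_cancel hp_pos.ne', ENNReal.rpow_one, mul_assoc,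
        ← ENNReal.rpow_add _ _ h htop]
      have hexp : (1 - p) * (1 / p) + (1 - 1 / p) = 0 := by field_simp; ring
      rw [hexp, ENNReal.rpow_zero, mul_one]
  rw [lintegral_congr_ae hsplit]
  exact ENNReal.lintegral_mul_norm_pow_le (by fun_prop) (by fun_prop) (by positivity)
    (sub_nonneg.2 hp_inv) (by ring)

theorem lintegral_rpow_lintegral_le_of_weight {κ : Measure α} {ν : Measure β} [SFinite κ]
    [SFinite ν] {p : ℝ} (hp : 1 ≤ p) {K : α → β → ℝ≥0∞} (hK : Measurable (Function.uncurry K))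
    {w : β → ℝ≥0∞} (hw : Measurable w) (hw_top : ∀ᵐ b ∂ν, w b ≠ ∞)
    (hK_zero : ∀ᵐ a ∂κ, ∀ᵐ b ∂ν, w b = 0 → K a b = 0) :
    (∫⁻ a, (∫⁻ b, K a b ∂ν) ^ p ∂κ) ^ (1 / p) ≤
      (∫⁻ b, (∫⁻ a, K a b ^ p ∂κ) * w b ^ (1 - p) ∂ν) ^ (1 / p) *
        (∫⁻ b, w b ∂ν) ^ (1 - 1 / p) := by
  have hp_pos : 0 < p := by positivity
  have hKw : Measurable (Function.uncurry fun a b => K a b ^ p * w b ^ (1 - p)) :=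
    (hK.pow_const p).mul ((hw.comp measurable_snd).pow_const _)
  have hpoint : ∀ᵐ a ∂κ, (∫⁻ b, K a b ∂ν) ^ p ≤
      (∫⁻ b, K a b ^ p * w b ^ (1 - p) ∂ν) * (∫⁻ b, w b ∂ν) ^ (p - 1) := by
    filter_upwards [hK_zero] with a ha
    have h := ENNReal.rpow_le_rpow (lintegral_le_lintegral_rpow_mul_rpow hp
      (hK.comp measurable_prodMk_left) hw hw_top ha) hp_pos.le
    have hexp : (1 - 1 / p) * p = p - 1 := by field_simp
    rwa [ENNReal.mul_rpow_of_nonneg _ _ hp_pos.le, ← ENNReal.rpow_mul, ← ENNReal.rpow_mul,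
      one_div_mul_cancel hp_pos.ne', ENNReal.rpow_one, hexp] at h
  calc (∫⁻ a, (∫⁻ b, K a b ∂ν) ^ p ∂κ) ^ (1 / p)
      ≤ (∫⁻ a, (∫⁻ b, K a b ^ p * w b ^ (1 - p) ∂ν) * (∫⁻ b, w b ∂ν) ^ (p - 1) ∂κ)
          ^ (1 / p) := by
        gcongr ?_ ^ _
        exact lintegral_mono_ae hpoint
    _ = ((∫⁻ b, (∫⁻ a, K a b ^ p ∂κ) * w b ^ (1 - p) ∂ν) * (∫⁻ b, w b ∂ν) ^ (p - 1))
          ^ (1 / p) := by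
        rw [lintegral_mul_const _ hKw.lintegral_prod_right,
          lintegral_lintegral_swap hKw.aemeasurable]
        congr! 4 with b
        exact lintegral_mul_const _ ((hK.comp measurable_prodMk_right).pow_const p)
    _ = _ := by
        have hexp : (p - 1) * (1 / p) = 1 - 1 / p := by field_simp
        rw [ENNReal.mul_rpow_of_nonneg _ _ (by positivity), ← ENNReal.rpow_mul, hexp]

-- The Hölder weight is the `L^p(κ)` norm of the section `K(·, b)`, which balances both factors.
theorem lintegral_rpow_lintegral_le_lintegral_lintegral_rpow {κ : Measure α} {ν : Measure β}
    [SFinite κ] [SFinite ν] {p : ℝ} (hp : 1 ≤ p) {K : α → β → ℝ≥0∞}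
    (hK : Measurable (Function.uncurry K)) :
    (∫⁻ a, (∫⁻ b, K a b ∂ν) ^ p ∂κ) ^ (1 / p) ≤
      ∫⁻ b, (∫⁻ a, K a b ^ p ∂κ) ^ (1 / p) ∂ν := by
  have hp_pos : 0 < p := by positivity
  set w : β → ℝ≥0∞ := fun b => (∫⁻ a, K a b ^ p ∂κ) ^ (1 / p) with hw_def
  have hw : Measurable w := (hK.pow_const p).lintegral_prod_left.pow_const _
  have hw_rpow (b : β) : ∫⁻ a, K a b ^ p ∂κ = w b ^ p := by
    rw [hw_def, ← ENNReal.rpow_mul, one_div_mul_cancel hp_pos.ne', ENNReal.rpow_one]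
  rcases eq_or_ne (∫⁻ b, w b ∂ν) ∞ with hW | hW
  · exact hW ▸ le_top
  have hw_top : ∀ᵐ b ∂ν, w b ≠ ∞ := (ae_lt_top hw hW).mono fun _ => LT.lt.ne
  have hK_zero : ∀ᵐ a ∂κ, ∀ᵐ b ∂ν, w b = 0 → K a b = 0 := by
    rw [Measure.ae_ae_comm (.imp (hw.comp measurable_snd (measurableSet_singleton 0))
      (hK (measurableSet_singleton 0)))]
    refine .of_forall fun b => ?_
    have hsection : Measurable fun a => K a b := hK.comp measurable_prodMk_right
    by_cases hb : w b = 0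
    · have hzero := hw_rpow b
      rw [hb, ENNReal.zero_rpow_of_pos hp_pos,
        lintegral_eq_zero_iff (hsection.pow_const p)] at hzero
      filter_upwards [hzero] with a ha _
      exact (ENNReal.rpow_eq_zero_iff_of_pos hp_pos).1 ha
    · exact .of_forall fun _ h => absurd h hb
  have hweight : ∀ᵐ b ∂ν, w b ^ p * w b ^ (1 - p) ≤ w b := by
    filter_upwards [hw_top] with b htop
    rcases eq_or_ne (w b) 0 with h | h
    · simp [h, hp_pos]
    · rw [← ENNReal.rpow_add _ _ h htop, add_sub_cancel, ENNReal.rpow_one]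
  calc (∫⁻ a, (∫⁻ b, K a b ∂ν) ^ p ∂κ) ^ (1 / p)
      ≤ (∫⁻ b, w b ^ p * w b ^ (1 - p) ∂ν) ^ (1 / p) * (∫⁻ b, w b ∂ν) ^ (1 - 1 / p) := by
        simpa only [hw_rpow] using
          lintegral_rpow_lintegral_le_of_weight hp hK hw hw_top hK_zero
    _ ≤ (∫⁻ b, w b ∂ν) ^ (1 / p) * (∫⁻ b, w b ∂ν) ^ (1 - 1 / p) := by
        gcongr ?_ ^ _ * _
        exact lintegral_mono_ae hweight
    _ = ∫⁻ b, w b ∂ν := by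
        rw [← ENNReal.rpow_add_of_nonneg _ _ (by positivity)
          (sub_nonneg.2 ((div_le_one hp_pos).2 hp)), add_sub_cancel, ENNReal.rpow_one]

end Minkowski

section Circle

theorem setLIntegral_Ioc_add_eq_of_periodic {f : ℝ → ℝ≥0∞} {T : ℝ} (hf : Function.Periodic f T)
    (hT : 0 < T) (s t : ℝ) : ∫⁻ x in Ioc s (s + T), f x = ∫⁻ x in Ioc t (t + T), f x := by
  have : VAddInvariantMeasure (AddSubgroup.zmultiples T) ℝ volume :=
    ⟨fun c s _ => measure_preimage_add _ _ _⟩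
  exact (isAddFundamentalDomain_Ioc hT s).setLIntegral_eq (isAddFundamentalDomain_Ioc hT t) f
    hf.map_vadd_zmultiples

/-- The (unnormalised) `L^p` norm of `f` over the circle of radius `r` about the origin; the
paper's `m_p(r, ·)` is `(2π)^(-1/p)` times it. -/
noncomputable def circleNorm (p r : ℝ) (f : ℂ → ℝ≥0∞) : ℝ≥0∞ :=
  (∫⁻ θ in Ioc 0 (2 * π), f (circleMap 0 r θ) ^ p) ^ (1 / p)

theorem circleNorm_eq_of_Ioc (p r : ℝ) (f : ℂ → ℝ≥0∞) (a : ℝ) :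
    circleNorm p r f = (∫⁻ θ in Ioc a (a + 2 * π), f (circleMap 0 r θ) ^ p) ^ (1 / p) := by
  rw [circleNorm, ← setLIntegral_Ioc_add_eq_of_periodic (f := fun θ => f (circleMap 0 r θ) ^ p)
    (fun θ => by simp only [periodic_circleMap 0 r θ]) Real.two_pi_pos 0 a, zero_add]

theorem ofReal_rpow_mul_le_circleNorm {p r a l : ℝ} (hp : 0 < p) (hl : l ≤ 2 * π)
    {f : ℂ → ℝ≥0∞} {A : ℝ≥0∞} (hA : ∀ θ ∈ Ioc a (a + l), A ≤ f (circleMap 0 r θ)) :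
    ENNReal.ofReal l ^ (1 / p) * A ≤ circleNorm p r f := by
  have harc : A ^ p * ENNReal.ofReal l ≤ ∫⁻ θ in Ioc a (a + 2 * π), f (circleMap 0 r θ) ^ p :=
    calc A ^ p * ENNReal.ofReal l = ∫⁻ _ in Ioc a (a + l), A ^ p := by
          rw [setLIntegral_const, Real.volume_Ioc, add_sub_cancel_left]
      _ ≤ ∫⁻ θ in Ioc a (a + l), f (circleMap 0 r θ) ^ p :=
          setLIntegral_mono' measurableSet_Ioc fun θ hθ => ENNReal.rpow_le_rpow (hA θ hθ) hp.le
      _ ≤ ∫⁻ θ in Ioc a (a + 2 * π), f (circleMap 0 r θ) ^ p :=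
          lintegral_mono_set (Ioc_subset_Ioc_right (by gcongr))
  calc ENNReal.ofReal l ^ (1 / p) * A = (A ^ p * ENNReal.ofReal l) ^ (1 / p) := by
        rw [ENNReal.mul_rpow_of_nonneg _ _ (by positivity), ← ENNReal.rpow_mul,
          mul_one_div_cancel hp.ne', ENNReal.rpow_one, mul_comm]
    _ ≤ circleNorm p r f := by
        rw [circleNorm_eq_of_Ioc p r f a]
        gcongr

theorem circleNorm_lintegral_le {β : Type*} [MeasurableSpace β] {ν : Measure β} [SFinite ν]
    {p r : ℝ} (hp : 1 ≤ p) {K : ℂ → β → ℝ≥0∞} (hK : Measurable (Function.uncurry K)) :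
    circleNorm p r (fun z => ∫⁻ b, K z b ∂ν) ≤ ∫⁻ b, circleNorm p r (K · b) ∂ν :=
  lintegral_rpow_lintegral_le_lintegral_lintegral_rpow hp
    (K := fun θ b => K (circleMap 0 r θ) b)
    (hK.comp (((measurable_circleMap 0 r).comp measurable_fst).prodMk measurable_snd))

theorem mpMean_eq_mul_toReal_circleNorm {p r : ℝ} (hp : 0 < p) {u : ℂ → ℝ} {f : ℂ → ℝ≥0∞}
    (hf : Measurable f) (hu : ∀ θ, |u (circleMap 0 r θ)| = (f (circleMap 0 r θ)).toReal)
    (hfin : circleNorm p r f ≠ ∞) :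
    mpMean p r u = (1 / (2 * π)) ^ (1 / p) * (circleNorm p r f).toReal := by
  have hmeas : Measurable fun θ => f (circleMap 0 r θ) ^ p :=
    (hf.comp (measurable_circleMap 0 r)).pow_const p
  have hlt : ∫⁻ θ in Ioc 0 (2 * π), f (circleMap 0 r θ) ^ p ≠ ∞ := fun h =>
    hfin (by rw [circleNorm, h, ENNReal.top_rpow_of_pos (by positivity)])
  have hint : ∫ θ in (0 : ℝ)..(2 * π), |u (r * exp (θ * I))| ^ p =
      (∫⁻ θ in Ioc 0 (2 * π), f (circleMap 0 r θ) ^ p).toReal := by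
    rw [intervalIntegral.integral_of_le Real.two_pi_pos.le, ← integral_toReal hmeas.aemeasurable
      (ae_lt_top hmeas hlt)]
    congr! with θ
    rw [← circleMap_zero, hu, ENNReal.toReal_rpow]
  rw [mpMean, hint, circleNorm, ← ENNReal.toReal_rpow,
    Real.mul_rpow (by positivity) ENNReal.toReal_nonneg]

theorem mpMean_nonneg (p r : ℝ) (u : ℂ → ℝ) : 0 ≤ mpMean p r u :=
  Real.rpow_nonneg (mul_nonneg (by positivity) (intervalIntegral.integral_nonneg
    Real.two_pi_pos.le fun _ _ => by positivity)) _

end Circle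

section Kernel

/-- The Green function of the unit disc with pole `ζ`: minus the logarithm in the paper's
integral representation of the potential. On the diagonal it takes the junk value `0`. -/
noncomputable def greenKernel (z ζ : ℂ) : ℝ :=
  Real.log (‖1 - z * conj ζ‖ / ‖z - ζ‖)

theorem greenKernel_eq_neg_log (z ζ : ℂ) :
    greenKernel z ζ = -Real.log (‖z - ζ‖ / ‖1 - z * conj ζ‖) := by
  rw [greenKernel, ← Real.log_inv, inv_div]

theorem measurable_greenKernel : Measurable (Function.uncurry greenKernel) := by
  unfold Function.uncurry greenKernel
  fun_prop

theorem norm_one_sub_mul_conj_sq (z ζ : ℂ) :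
    ‖1 - z * conj ζ‖ ^ 2 = ‖z - ζ‖ ^ 2 + (1 - ‖z‖ ^ 2) * (1 - ‖ζ‖ ^ 2) := by
  simp only [← normSq_eq_norm_sq, normSq_apply, sub_re, sub_im, one_re, one_im, mul_re, mul_im,
    conj_re, conj_im]
  ring

theorem greenKernel_eq_log {z ζ : ℂ} (hne : z ≠ ζ) :
    greenKernel z ζ =
      1 / 2 * Real.log (1 + (1 - ‖z‖ ^ 2) * (1 - ‖ζ‖ ^ 2) / ‖z - ζ‖ ^ 2) := by
  have hdist : ‖z - ζ‖ ≠ 0 := norm_ne_zero_iff.2 (sub_ne_zero.2 hne)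
  have hsq : 1 + (1 - ‖z‖ ^ 2) * (1 - ‖ζ‖ ^ 2) / ‖z - ζ‖ ^ 2 =
      (‖1 - z * conj ζ‖ / ‖z - ζ‖) ^ 2 := by
    rw [div_pow, norm_one_sub_mul_conj_sq, add_div, div_self (pow_ne_zero 2 hdist)]
  rw [hsq, Real.log_pow, greenKernel, Nat.cast_ofNat, one_div, inv_mul_cancel_left₀ two_ne_zero]

theorem greenKernel_nonneg {z ζ : ℂ} (hz : ‖z‖ < 1) (hζ : ‖ζ‖ < 1) : 0 ≤ greenKernel z ζ := by
  rcases eq_or_ne z ζ with rfl | hne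
  · simp [greenKernel]
  have hz_sq : 0 ≤ 1 - ‖z‖ ^ 2 := by nlinarith [norm_nonneg z]
  have hζ_sq : 0 ≤ 1 - ‖ζ‖ ^ 2 := by nlinarith [norm_nonneg ζ]
  rw [greenKernel_eq_log hne]
  exact mul_nonneg one_half_pos.le (Real.log_nonneg (le_add_of_nonneg_right (by positivity)))

theorem greenKernel_le_log {z ζ : ℂ} (hz : ‖z‖ < 1) (hζ : ‖ζ‖ < 1) {y : ℝ} (hy : 0 < y)
    (hyz : y ≤ ‖z - ζ‖) :
    greenKernel z ζ ≤ 1 / 2 * Real.log (1 + 4 * ((1 - ‖z‖) * (1 - ‖ζ‖)) / y ^ 2) := by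
  have hne : z ≠ ζ := sub_ne_zero.1 (norm_pos_iff.1 (hy.trans_le hyz))
  have hz_sq : 0 ≤ 1 - ‖z‖ ^ 2 := by nlinarith [norm_nonneg z]
  have hζ_sq : 0 ≤ 1 - ‖ζ‖ ^ 2 := by nlinarith [norm_nonneg ζ]
  have hprod : (1 - ‖z‖ ^ 2) * (1 - ‖ζ‖ ^ 2) ≤ 4 * ((1 - ‖z‖) * (1 - ‖ζ‖)) :=
    calc (1 - ‖z‖ ^ 2) * (1 - ‖ζ‖ ^ 2) ≤ 2 * (1 - ‖z‖) * (2 * (1 - ‖ζ‖)) := by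
          gcongr <;> nlinarith
      _ = 4 * ((1 - ‖z‖) * (1 - ‖ζ‖)) := by ring
  rw [greenKernel_eq_log hne]
  gcongr

theorem log_le_greenKernel {z ζ : ℂ} {K : ℝ} (hz : ‖z‖ < 1) (hζ : ‖ζ‖ < 1)
    (hdepth : 2 * (1 - ‖z‖) ≤ 1 - ‖ζ‖) (hdist : ‖z - ζ‖ ≤ K * (1 - ‖z‖)) :
    1 / 2 * Real.log (1 + 2 / K ^ 2) ≤ greenKernel z ζ := by
  have hne : z ≠ ζ := by rintro rfl; linarith
  have hdist_pos : 0 < ‖z - ζ‖ := norm_pos_iff.2 (sub_ne_zero.2 hne)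
  have hd : 0 < 1 - ‖z‖ := sub_pos.2 hz
  have hprod : 2 * (1 - ‖z‖) ^ 2 ≤ (1 - ‖z‖ ^ 2) * (1 - ‖ζ‖ ^ 2) :=
    calc 2 * (1 - ‖z‖) ^ 2 = (1 - ‖z‖) * (2 * (1 - ‖z‖)) := by ring
      _ ≤ (1 - ‖z‖ ^ 2) * (1 - ‖ζ‖ ^ 2) := by
          gcongr <;> nlinarith [norm_nonneg z, norm_nonneg ζ]
  rw [greenKernel_eq_log hne]
  gcongr 1 / 2 * Real.log (1 + ?_)
  calc 2 / K ^ 2 = 2 * (1 - ‖z‖) ^ 2 / (K * (1 - ‖z‖)) ^ 2 := by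
        rw [mul_pow, mul_div_mul_right _ _ (by positivity)]
    _ ≤ (1 - ‖z‖ ^ 2) * (1 - ‖ζ‖ ^ 2) / ‖z - ζ‖ ^ 2 :=
        div_le_div₀ ((by positivity : (0 : ℝ) ≤ _).trans hprod) hprod (by positivity) (by gcongr)

end Kernel

section Profile

/-- The scale-invariant majorant, as a function of the angle, of the Green function on a circle. -/
noncomputable def logProfile (x : ℝ) : ℝ :=
  Real.log (1 + x⁻¹ ^ 2)

theorem logProfile_nonneg (x : ℝ) : 0 ≤ logProfile x :=
  Real.log_nonneg (le_add_of_nonneg_right (by positivity))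

theorem inv_one_add_sq_le_logProfile {x : ℝ} (hx : x ≠ 0) : (1 + x ^ 2)⁻¹ ≤ logProfile x :=
  calc (1 + x ^ 2)⁻¹ = 1 - (1 + x⁻¹ ^ 2)⁻¹ := by field_simp; ring
    _ ≤ logProfile x := Real.one_sub_inv_le_log_of_pos (by positivity)

theorem logProfile_neg (x : ℝ) : logProfile (-x) = logProfile x := by
  rw [logProfile, inv_neg, neg_sq, logProfile]

theorem measurable_logProfile : Measurable logProfile := by
  unfold logProfile
  fun_prop

theorem log_one_add_le_rpow_div {ε y : ℝ} (hε : 0 < ε) (hε1 : ε ≤ 1) (hy : 0 ≤ y) :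
    Real.log (1 + y) ≤ y ^ ε / ε := by
  rw [le_div_iff₀' hε, ← Real.log_rpow (by positivity)]
  calc Real.log ((1 + y) ^ ε) ≤ Real.log (1 + y ^ ε) := by
        gcongr
        simpa using Real.rpow_add_le_add_rpow zero_le_one hy hε.le hε1
    _ ≤ y ^ ε := by linarith [Real.log_le_sub_one_of_pos (x := 1 + y ^ ε) (by positivity)]

theorem logProfile_rpow_le {ε p x : ℝ} (hε : 0 < ε) (hε1 : ε ≤ 1) (hp : 0 ≤ p) (hx : 0 < x) :
    logProfile x ^ p ≤ ε⁻¹ ^ p * x ^ (-(2 * (ε * p))) := by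
  calc logProfile x ^ p ≤ ((x⁻¹ ^ 2) ^ ε / ε) ^ p :=
        Real.rpow_le_rpow (logProfile_nonneg x)
          (log_one_add_le_rpow_div hε hε1 (by positivity)) hp
    _ = ε⁻¹ ^ p * x ^ (-(2 * (ε * p))) := by
        rw [div_eq_inv_mul, Real.mul_rpow (by positivity) (by positivity), ← Real.rpow_natCast,
          ← Real.rpow_mul (by positivity), ← Real.rpow_mul (by positivity),
          Real.inv_rpow hx.le, ← Real.rpow_neg hx.le, Nat.cast_ofNat]

theorem integrableOn_logProfile_rpow {ε p : ℝ} {s : Set ℝ} (hε : 0 < ε) (hε1 : ε ≤ 1)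
    (hp : 0 ≤ p) (hs : MeasurableSet s) (hs_pos : s ⊆ Ioi 0)
    (hint : IntegrableOn (fun x => x ^ (-(2 * (ε * p)))) s) :
    IntegrableOn (fun x => logProfile x ^ p) s := by
  refine Integrable.mono' (hint.const_mul (ε⁻¹ ^ p))
    (measurable_logProfile.pow_const p).aestronglyMeasurable ?_
  filter_upwards [ae_restrict_mem hs] with x hx
  rw [Real.norm_of_nonneg (Real.rpow_nonneg (logProfile_nonneg x) p)]
  exact logProfile_rpow_le hε hε1 hp (hs_pos hx)

theorem integrable_logProfile_rpow {p : ℝ} (hp : 1 / 2 < p) :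
    Integrable fun x => logProfile x ^ p := by
  have hp_pos : 0 < p := by positivity
  have hnear : IntegrableOn (fun x => logProfile x ^ p) (Ioc 0 1) := by
    have hexp : -(2 * (1 / (4 * p) * p)) = -(1 / 2) := by field_simp; norm_num
    refine integrableOn_logProfile_rpow (ε := 1 / (4 * p)) (by positivity)
      ((div_le_one (by positivity)).2 (by linarith)) hp_pos.le measurableSet_Ioc
      Ioc_subset_Ioi_self ?_
    rw [hexp, ← intervalIntegrable_iff_integrableOn_Ioc_of_le zero_le_one]
    exact intervalIntegral.intervalIntegrable_rpow' (by norm_num)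
  have hfar : IntegrableOn (fun x => logProfile x ^ p) (Ioi 1) :=
    integrableOn_logProfile_rpow one_pos le_rfl hp_pos.le measurableSet_Ioi
      (Ioi_subset_Ioi zero_le_one) (integrableOn_Ioi_rpow_of_lt (by linarith) one_pos)
  have hpos : IntegrableOn (fun x => logProfile x ^ p) (Ioi 0) :=
    Ioc_union_Ioi_eq_Ioi (zero_le_one (α := ℝ)) ▸ hnear.union hfar
  have hneg : IntegrableOn (fun x => logProfile x ^ p) (Iic 0) := by
    rw [← neg_zero, ← integrableOn_Ici_iff_integrableOn_Ioi] at hpos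
    simpa only [logProfile_neg] using hpos.comp_neg_Iic
  rw [← integrableOn_univ, ← Iic_union_Ioi (a := (0 : ℝ))]
  exact hneg.union hpos

theorem lintegral_logProfile_div_rpow {p : ℝ} (hp : 1 / 2 < p) {R : ℝ} (hR : 0 < R) :
    ∫⁻ t, ENNReal.ofReal (logProfile (t / R) ^ p) =
      ENNReal.ofReal (R * ∫ x, logProfile x ^ p) := by
  rw [← ofReal_integral_eq_lintegral_ofReal
      ((integrable_comp_div_iff _ hR.ne').2 (integrable_logProfile_rpow hp))
      (.of_forall fun t => Real.rpow_nonneg (logProfile_nonneg _) p),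
    Measure.integral_comp_div (fun x => logProfile x ^ p), abs_of_pos hR, smul_eq_mul]

end Profile

section KernelNorm

theorem norm_circleMap_zero_sub_circleMap_zero (r a t : ℝ) :
    ‖circleMap 0 r (a + t) - circleMap 0 r a‖ = 2 * |r| * |Real.sin (t / 2)| := by
  have hfactor : circleMap 0 r (a + t) - circleMap 0 r a =
      circleMap 0 r a * (exp (I * t) - 1) := by
    rw [circleMap_zero, circleMap_zero, ofReal_add, add_mul, exp_add, mul_comm I]
    ring
  rw [hfactor, norm_mul, norm_circleMap_zero, norm_exp_I_mul_ofReal_sub_one, norm_mul,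
    Real.norm_two, Real.norm_eq_abs]
  ring

theorem norm_circleMap_zero_arg_sub_le {z ζ : ℂ} {r : ℝ} (hz : ‖z‖ = r) :
    ‖circleMap 0 r ζ.arg - ζ‖ ≤ ‖z - ζ‖ := by
  have hpolar : circleMap 0 r ζ.arg - ζ = (r - ‖ζ‖ : ℝ) * exp (ζ.arg * I) := by
    rw [circleMap_zero, ofReal_sub, sub_mul, norm_mul_exp_arg_mul_I]
  rw [hpolar, norm_mul, norm_exp_ofReal_mul_I, mul_one, norm_real, Real.norm_eq_abs, ← hz]
  exact abs_norm_sub_norm_le z ζ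

theorem abs_le_norm_circleMap_zero_sub {r t : ℝ} (ζ : ℂ) (hr : 1 / 2 ≤ r) (ht : |t| ≤ π) :
    |t| ≤ 2 * π * ‖circleMap 0 r (ζ.arg + t) - ζ‖ := by
  have hchord : 2 / π * |t / 2| ≤ |Real.sin (t / 2)| :=
    Real.mul_abs_le_abs_sin (by rw [abs_div, abs_two]; gcongr)
  have hnorm : ‖circleMap 0 r (ζ.arg + t)‖ = r := by
    rw [norm_circleMap_zero, abs_of_nonneg (by linarith)]
  have hsin : |Real.sin (t / 2)| ≤ 2 * ‖circleMap 0 r (ζ.arg + t) - ζ‖ :=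
    calc |Real.sin (t / 2)| ≤ 2 * |r| * |Real.sin (t / 2)| :=
          le_mul_of_one_le_left (abs_nonneg _) (by linarith [le_abs_self r])
      _ = ‖circleMap 0 r (ζ.arg + t) - circleMap 0 r ζ.arg‖ :=
          (norm_circleMap_zero_sub_circleMap_zero r ζ.arg t).symm
      _ ≤ ‖circleMap 0 r (ζ.arg + t) - ζ‖ + ‖circleMap 0 r ζ.arg - ζ‖ :=
          norm_sub_le_norm_sub_add_norm_sub _ _ _ |>.trans_eq (by rw [norm_sub_rev ζ])
      _ ≤ 2 * ‖circleMap 0 r (ζ.arg + t) - ζ‖ := by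
          linarith [norm_circleMap_zero_arg_sub_le (ζ := ζ) hnorm]
  calc |t| = π * (2 / π * |t / 2|) := by
        rw [abs_div, abs_two]
        field_simp
    _ ≤ π * (2 * ‖circleMap 0 r (ζ.arg + t) - ζ‖) := by gcongr π * ?_; exact hchord.trans hsin
    _ = 2 * π * ‖circleMap 0 r (ζ.arg + t) - ζ‖ := by ring

theorem greenKernel_le_half_logProfile {z ζ : ℂ} (hz : ‖z‖ < 1) (hζ : ‖ζ‖ < 1) {t : ℝ}
    (ht : t ≠ 0) (hdist : |t| ≤ 2 * π * ‖z - ζ‖) :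
    greenKernel z ζ ≤ 1 / 2 * logProfile (t / (4 * π * max (1 - ‖z‖) (1 - ‖ζ‖))) := by
  have hz' : 0 < 1 - ‖z‖ := sub_pos.2 hz
  have hζ' : 0 < 1 - ‖ζ‖ := sub_pos.2 hζ
  have hy : |t| / (2 * π) ≤ ‖z - ζ‖ := (div_le_iff₀' Real.two_pi_pos).2 hdist
  refine (greenKernel_le_log hz hζ (by positivity) hy).trans ?_
  rw [logProfile, inv_div, div_pow, div_pow, sq_abs]
  gcongr 1 / 2 * Real.log (1 + ?_)
  calc 4 * ((1 - ‖z‖) * (1 - ‖ζ‖)) / (t ^ 2 / (2 * π) ^ 2)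
      ≤ 4 * (max (1 - ‖z‖) (1 - ‖ζ‖) * max (1 - ‖z‖) (1 - ‖ζ‖)) / (t ^ 2 / (2 * π) ^ 2) := by
        gcongr
        exacts [le_max_left _ _, le_max_right _ _]
    _ = (4 * π * max (1 - ‖z‖) (1 - ‖ζ‖)) ^ 2 / t ^ 2 := by field_simp; ring

theorem greenKernel_le_of_two_mul_min_lt_max {z ζ : ℂ} (hz : ‖z‖ < 1) (hζ : ‖ζ‖ < 1) {t : ℝ}
    (ht : t ≠ 0) (hdist : |t| ≤ 2 * π * ‖z - ζ‖)
    (hlt : 2 * min (1 - ‖z‖) (1 - ‖ζ‖) < max (1 - ‖z‖) (1 - ‖ζ‖)) :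
    greenKernel z ζ ≤ 9 * (min (1 - ‖z‖) (1 - ‖ζ‖) / max (1 - ‖z‖) (1 - ‖ζ‖)) *
      logProfile (t / (4 * π * max (1 - ‖z‖) (1 - ‖ζ‖))) := by
  have hgap : max (1 - ‖z‖) (1 - ‖ζ‖) - min (1 - ‖z‖) (1 - ‖ζ‖) ≤ ‖z - ζ‖ := by
    rw [max_sub_min_eq_abs, sub_sub_sub_cancel_left]
    exact abs_norm_sub_norm_le z ζ
  have hm : 0 < min (1 - ‖z‖) (1 - ‖ζ‖) := lt_min (sub_pos.2 hz) (sub_pos.2 hζ)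
  have hmD := min_mul_max (1 - ‖z‖) (1 - ‖ζ‖)
  set m := min (1 - ‖z‖) (1 - ‖ζ‖)
  set D := max (1 - ‖z‖) (1 - ‖ζ‖)
  have hD : 0 < D := by linarith
  have hρ : D ≤ 2 * ‖z - ζ‖ := by linarith
  have hρ_pos : 0 < ‖z - ζ‖ := by linarith
  have hangle : (t / (4 * π * D)) ^ 2 ≤ (‖z - ζ‖ / (2 * D)) ^ 2 := by
    rw [sq_le_sq, abs_div, abs_of_pos (by positivity : 0 < 4 * π * D),
      abs_of_pos (by positivity : 0 < ‖z - ζ‖ / (2 * D)), div_le_iff₀ (by positivity)]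
    exact hdist.trans_eq (by field_simp; norm_num)
  have hweight : 1 + (t / (4 * π * D)) ^ 2 ≤ 9 / 2 * (‖z - ζ‖ / D) ^ 2 := by
    have hone : 1 ≤ 4 * (‖z - ζ‖ / D) ^ 2 := by
      rw [div_pow, ← mul_div_assoc, one_le_div (by positivity)]
      nlinarith
    calc 1 + (t / (4 * π * D)) ^ 2
        ≤ 4 * (‖z - ζ‖ / D) ^ 2 + (‖z - ζ‖ / (2 * D)) ^ 2 := add_le_add hone hangle
      _ = 17 / 4 * (‖z - ζ‖ / D) ^ 2 := by field_simp; norm_num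
      _ ≤ 9 / 2 * (‖z - ζ‖ / D) ^ 2 := by gcongr ?_ * _; norm_num
  calc greenKernel z ζ ≤ 1 / 2 * Real.log (1 + 4 * (m * D) / ‖z - ζ‖ ^ 2) :=
        hmD ▸ greenKernel_le_log hz hζ hρ_pos le_rfl
    _ ≤ 1 / 2 * (4 * (m * D) / ‖z - ζ‖ ^ 2) := by
        gcongr
        linarith [Real.log_le_sub_one_of_pos (x := 1 + 4 * (m * D) / ‖z - ζ‖ ^ 2) (by positivity)]
    _ = 9 * (m / D) * (9 / 2 * (‖z - ζ‖ / D) ^ 2)⁻¹ := by field_simp; norm_num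
    _ ≤ 9 * (m / D) * (1 + (t / (4 * π * D)) ^ 2)⁻¹ := by gcongr
    _ ≤ 9 * (m / D) * logProfile (t / (4 * π * D)) := by
        gcongr
        exact inv_one_add_sq_le_logProfile (by positivity)

theorem greenKernel_le_logProfile {z ζ : ℂ} (hz : ‖z‖ < 1) (hζ : ‖ζ‖ < 1) {t : ℝ}
    (ht : t ≠ 0) (hdist : |t| ≤ 2 * π * ‖z - ζ‖) :
    greenKernel z ζ ≤ 9 * (min (1 - ‖z‖) (1 - ‖ζ‖) / max (1 - ‖z‖) (1 - ‖ζ‖)) *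
      logProfile (t / (4 * π * max (1 - ‖z‖) (1 - ‖ζ‖))) := by
  rcases lt_or_ge (2 * min (1 - ‖z‖) (1 - ‖ζ‖)) (max (1 - ‖z‖) (1 - ‖ζ‖))
    with hlt | hle
  · exact greenKernel_le_of_two_mul_min_lt_max hz hζ ht hdist hlt
  · refine (greenKernel_le_half_logProfile hz hζ ht hdist).trans ?_
    have hmax : 0 < max (1 - ‖z‖) (1 - ‖ζ‖) := lt_max_of_lt_left (sub_pos.2 hz)
    have hratio : 1 / 2 ≤ min (1 - ‖z‖) (1 - ‖ζ‖) / max (1 - ‖z‖) (1 - ‖ζ‖) :=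
      (le_div_iff₀ hmax).2 (by linarith)
    exact mul_le_mul_of_nonneg_right (by linarith) (logProfile_nonneg _)

theorem lintegral_Ioc_greenKernel_rpow_le {p r : ℝ} {ζ : ℂ} (hp : 1 ≤ p) (hr : 1 / 2 ≤ r)
    (hr1 : r < 1) (hζ : ‖ζ‖ < 1) :
    ∫⁻ θ in Ioc (ζ.arg - π) (ζ.arg - π + 2 * π),
        ENNReal.ofReal (greenKernel (circleMap 0 r θ) ζ) ^ p ≤
      ENNReal.ofReal ((9 * (min (1 - r) (1 - ‖ζ‖) / max (1 - r) (1 - ‖ζ‖))) ^ p *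
        (4 * π * max (1 - r) (1 - ‖ζ‖) * ∫ x, logProfile x ^ p)) := by
  have hp_pos : 0 < p := by positivity
  have hnorm (θ : ℝ) : ‖circleMap 0 r θ‖ = r := by
    rw [norm_circleMap_zero, abs_of_nonneg (by linarith)]
  have hm : 0 < min (1 - r) (1 - ‖ζ‖) := lt_min (sub_pos.2 hr1) (sub_pos.2 hζ)
  have hD : 0 < max (1 - r) (1 - ‖ζ‖) := lt_max_of_lt_left (sub_pos.2 hr1)
  have hdist (θ : ℝ) (hθ : θ ∈ Ioc (ζ.arg - π) (ζ.arg - π + 2 * π)) :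
      |θ - ζ.arg| ≤ 2 * π * ‖circleMap 0 r θ - ζ‖ := by
    have harg : |θ - ζ.arg| ≤ π := abs_le.2 ⟨by linarith [hθ.1], by linarith [hθ.2]⟩
    simpa only [add_sub_cancel] using abs_le_norm_circleMap_zero_sub ζ hr harg
  have hpoint (θ : ℝ) (hθ : θ ∈ Ioc (ζ.arg - π) (ζ.arg - π + 2 * π)) (hne : θ ≠ ζ.arg) :=
    greenKernel_le_logProfile ((hnorm θ).trans_lt hr1) hζ (sub_ne_zero.2 hne) (hdist θ hθ)
  simp only [hnorm] at hpoint
  set m := min (1 - r) (1 - ‖ζ‖)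
  set D := max (1 - r) (1 - ‖ζ‖)
  calc ∫⁻ θ in Ioc (ζ.arg - π) (ζ.arg - π + 2 * π),
        ENNReal.ofReal (greenKernel (circleMap 0 r θ) ζ) ^ p
      ≤ ∫⁻ θ in Ioc (ζ.arg - π) (ζ.arg - π + 2 * π), ENNReal.ofReal ((9 * (m / D)) ^ p) *
          ENNReal.ofReal (logProfile ((θ - ζ.arg) / (4 * π * D)) ^ p) := by
        refine lintegral_mono_ae ?_
        filter_upwards [ae_restrict_mem measurableSet_Ioc,
          ae_restrict_of_ae (Measure.ae_ne volume ζ.arg)] with θ hθ hne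
        rw [← ENNReal.ofReal_mul (by positivity),
          ← Real.mul_rpow (by positivity) (logProfile_nonneg _),
          ← ENNReal.ofReal_rpow_of_nonneg (mul_nonneg (by positivity) (logProfile_nonneg _))
            hp_pos.le]
        gcongr
        exact hpoint θ hθ hne
    _ ≤ ENNReal.ofReal ((9 * (m / D)) ^ p) *
          ∫⁻ θ, ENNReal.ofReal (logProfile ((θ - ζ.arg) / (4 * π * D)) ^ p) := by
        rw [← lintegral_const_mul' _ _ ENNReal.ofReal_ne_top]
        exact setLIntegral_le_lintegral _ _
    _ = ENNReal.ofReal ((9 * (m / D)) ^ p * (4 * π * D * ∫ x, logProfile x ^ p)) := by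
        rw [lintegral_sub_right_eq_self
            (fun t => ENNReal.ofReal (logProfile (t / (4 * π * D)) ^ p)) ζ.arg,
          lintegral_logProfile_div_rpow (by linarith) (by positivity),
          ← ENNReal.ofReal_mul (by positivity)]

/-- The constant in the bound for the circle norm of the Green function. -/
noncomputable def kernelConst (p : ℝ) : ℝ :=
  9 * (4 * π * ∫ x, logProfile x ^ p) ^ (1 / p)

theorem kernelConst_nonneg (p : ℝ) : 0 ≤ kernelConst p := by
  have : 0 ≤ ∫ x, logProfile x ^ p :=
    integral_nonneg fun x => Real.rpow_nonneg (logProfile_nonneg x) p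
  unfold kernelConst
  positivity

theorem circleNorm_greenKernel_le {p r : ℝ} {ζ : ℂ} (hp : 1 ≤ p) (hr : 1 / 2 ≤ r) (hr1 : r < 1)
    (hζ : ‖ζ‖ < 1) :
    circleNorm p r (fun z => ENNReal.ofReal (greenKernel z ζ)) ≤
      ENNReal.ofReal (kernelConst p * (1 - r) ^ (1 / p - 1) * min (1 - r) (1 - ‖ζ‖)) := by
  have hp_pos : 0 < p := by positivity
  have hI : 0 ≤ ∫ x, logProfile x ^ p :=
    integral_nonneg fun x => Real.rpow_nonneg (logProfile_nonneg x) p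
  have hr' : 0 < 1 - r := sub_pos.2 hr1
  have hmin : 0 < min (1 - r) (1 - ‖ζ‖) := lt_min hr' (sub_pos.2 hζ)
  have hint := lintegral_Ioc_greenKernel_rpow_le hp hr hr1 hζ
  set m := min (1 - r) (1 - ‖ζ‖)
  set D := max (1 - r) (1 - ‖ζ‖)
  have hD_pos : 0 < D := lt_max_of_lt_left hr'
  have hpow : ((9 * (m / D)) ^ p * (4 * π * D * ∫ x, logProfile x ^ p)) ^ (1 / p) =
      kernelConst p * D ^ (1 / p - 1) * m := by
    rw [Real.mul_rpow (by positivity) (by positivity), ← Real.rpow_mul (by positivity),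
      mul_one_div_cancel hp_pos.ne', Real.rpow_one, mul_right_comm (4 * π),
      Real.mul_rpow (by positivity) hD_pos.le, Real.rpow_sub_one hD_pos.ne', kernelConst]
    ring
  calc circleNorm p r (fun z => ENNReal.ofReal (greenKernel z ζ))
      ≤ ENNReal.ofReal ((9 * (m / D)) ^ p * (4 * π * D * ∫ x, logProfile x ^ p)) ^ (1 / p) := by
        rw [circleNorm_eq_of_Ioc p r _ (ζ.arg - π)]
        gcongr
    _ = ENNReal.ofReal (kernelConst p * D ^ (1 / p - 1) * m) := by
        rw [ENNReal.ofReal_rpow_of_nonneg (by positivity) (by positivity), hpow]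
    _ ≤ ENNReal.ofReal (kernelConst p * (1 - r) ^ (1 / p - 1) * m) := by
        have hconst := kernelConst_nonneg p
        gcongr ENNReal.ofReal (_ * ?_ * _)
        exact Real.rpow_le_rpow_of_nonpos hr' (le_max_left _ _)
          (sub_nonpos.2 ((div_le_one hp_pos).2 hp))

end KernelNorm

section LayerCake

theorem lintegral_min_one_sub_norm {E : Type*} [SeminormedAddCommGroup E] [MeasurableSpace E]
    [OpensMeasurableSpace E] {ν : Measure E} (hν : ∀ᵐ ζ ∂ν, ‖ζ‖ < 1) {d : ℝ} (hd : 0 ≤ d) :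
    ∫⁻ ζ, ENNReal.ofReal (min d (1 - ‖ζ‖)) ∂ν = ∫⁻ s in Ioc 0 d, ν (closedBall 0 (1 - s)) := by
  have hlevel (s : ℝ) : ν {ζ | s ≤ min d (1 - ‖ζ‖)} =
      (Iic d).indicator (fun s => ν (closedBall 0 (1 - s))) s := by
    by_cases hs : s ≤ d
    · rw [indicator_of_mem (mem_Iic.2 hs)]
      congr 1
      ext ζ
      simp only [mem_ofPred_eq, le_min_iff, hs, true_and, mem_closedBall, dist_zero_right,
        le_sub_comm]
    · simp only [le_min_iff, hs, false_and, ofPred_false, measure_empty, mem_Iic,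
        not_false_eq_true, indicator_of_notMem]
  rw [lintegral_eq_lintegral_meas_le ν
    (hν.mono fun ζ hζ => le_min hd (sub_pos.2 hζ).le) (by fun_prop)]
  simp only [hlevel]
  rw [lintegral_indicator measurableSet_Iic, Measure.restrict_restrict measurableSet_Iic,
    inter_comm, Ioi_inter_Iic]

theorem lintegral_Ioc_ofReal_mul_rpow {C β d : ℝ} (hC : 0 ≤ C) (hβ : β < 1) (hd : 0 ≤ d) :
    ∫⁻ s in Ioc 0 d, ENNReal.ofReal (C * s ^ (-β)) =
      ENNReal.ofReal (C * d ^ (1 - β) / (1 - β)) := by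
  have hint : IntervalIntegrable (fun s => C * s ^ (-β)) volume 0 d :=
    (intervalIntegral.intervalIntegrable_rpow' (by linarith)).const_mul C
  rw [← ofReal_integral_eq_lintegral_ofReal
      ((intervalIntegrable_iff_integrableOn_Ioc_of_le hd).1 hint)
      ((ae_restrict_mem measurableSet_Ioc).mono fun s hs =>
        mul_nonneg hC (Real.rpow_nonneg hs.1.le _)),
    ← intervalIntegral.integral_of_le hd, intervalIntegral.integral_const_mul,
    integral_rpow (.inl (by linarith)), neg_add_eq_sub, Real.zero_rpow (by linarith), sub_zero,
    mul_div_assoc]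

end LayerCake

section Potential

/-- The measures on the unit disc that have a Green potential: the Blaschke condition
`∫ (1 - |ζ|) dν(ζ) < ∞`. -/
structure IsBlaschke (ν : Measure ℂ) : Prop where
  ae_norm_lt_one : ∀ᵐ ζ ∂ν, ‖ζ‖ < 1
  lintegral_ne_top : ∫⁻ ζ, ENNReal.ofReal (1 - ‖ζ‖) ∂ν ≠ ∞

/-- The Green potential of `ν`, with the sign that makes it nonnegative: the paper's `u` is minus
this potential. -/
noncomputable def greenPotential (ν : Measure ℂ) (z : ℂ) : ℝ≥0∞ :=
  ∫⁻ ζ, ENNReal.ofReal (greenKernel z ζ) ∂ν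

variable {ν : Measure ℂ} {p r : ℝ}

theorem IsBlaschke.measure_closedBall_lt_top (hν : IsBlaschke ν) (hr : r < 1) :
    ν (closedBall 0 r) < ∞ := by
  have hsub : closedBall (0 : ℂ) r ⊆ {ζ | ENNReal.ofReal (1 - r) ≤ ENNReal.ofReal (1 - ‖ζ‖)} :=
    fun ζ hζ => ENNReal.ofReal_le_ofReal (by linarith [mem_closedBall_zero_iff.1 hζ])
  calc ν (closedBall 0 r) ≤ ν {ζ | ENNReal.ofReal (1 - r) ≤ ENNReal.ofReal (1 - ‖ζ‖)} :=
        measure_mono hsub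
    _ ≤ (∫⁻ ζ, ENNReal.ofReal (1 - ‖ζ‖) ∂ν) / ENNReal.ofReal (1 - r) :=
        meas_ge_le_lintegral_div (by fun_prop) (by simpa using hr) ENNReal.ofReal_ne_top
    _ < ∞ := ENNReal.div_lt_top hν.lintegral_ne_top (by simpa using hr)

theorem IsBlaschke.sFinite (hν : IsBlaschke ν) : SFinite ν := by
  have hmeas : Measurable fun ζ : ℂ => ENNReal.ofReal (1 - ‖ζ‖) := by fun_prop
  have : IsFiniteMeasure (ν.withDensity fun ζ => ENNReal.ofReal (1 - ‖ζ‖)) :=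
    isFiniteMeasure_withDensity hν.lintegral_ne_top
  rw [← withDensity_inv_same hmeas (hν.ae_norm_lt_one.mono fun ζ hζ => by simpa using hζ)
    (.of_forall fun _ => ENNReal.ofReal_ne_top)]
  infer_instance

theorem measurable_greenPotential [SFinite ν] : Measurable (greenPotential ν) :=
  measurable_greenKernel.ennreal_ofReal.lintegral_prod_right

theorem IsBlaschke.abs_integral_log_eq (hν : IsBlaschke ν) {z : ℂ} (hz : ‖z‖ < 1) :
    |∫ ζ, Real.log (‖z - ζ‖ / ‖1 - z * conj ζ‖) ∂ν| = (greenPotential ν z).toReal := by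
  have hnonneg : 0 ≤ᵐ[ν] greenKernel z :=
    hν.ae_norm_lt_one.mono fun ζ hζ => greenKernel_nonneg hz hζ
  rw [← abs_neg, ← integral_neg]
  simp only [← greenKernel_eq_neg_log]
  rw [abs_of_nonneg (integral_nonneg_of_ae hnonneg), integral_eq_lintegral_of_nonneg_ae hnonneg
    (measurable_greenKernel.comp measurable_prodMk_left).aestronglyMeasurable, greenPotential]

theorem IsBlaschke.circleNorm_greenPotential_le (hν : IsBlaschke ν) (hp : 1 ≤ p)
    (hr : 1 / 2 ≤ r) (hr1 : r < 1) :
    circleNorm p r (greenPotential ν) ≤ ENNReal.ofReal (kernelConst p * (1 - r) ^ (1 / p - 1)) *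
      ∫⁻ ζ, ENNReal.ofReal (min (1 - r) (1 - ‖ζ‖)) ∂ν := by
  have := hν.sFinite
  calc circleNorm p r (greenPotential ν)
      ≤ ∫⁻ ζ, circleNorm p r (fun z => ENNReal.ofReal (greenKernel z ζ)) ∂ν :=
        circleNorm_lintegral_le hp measurable_greenKernel.ennreal_ofReal
    _ ≤ ∫⁻ ζ, ENNReal.ofReal (kernelConst p * (1 - r) ^ (1 / p - 1)) *
          ENNReal.ofReal (min (1 - r) (1 - ‖ζ‖)) ∂ν := by
        refine lintegral_mono_ae (hν.ae_norm_lt_one.mono fun ζ hζ => ?_)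
        rw [← ENNReal.ofReal_mul' (le_min (sub_pos.2 hr1).le (sub_pos.2 hζ).le)]
        exact circleNorm_greenKernel_le hp hr hr1 hζ
    _ = _ := lintegral_const_mul _ (by fun_prop)

theorem IsBlaschke.circleNorm_greenPotential_lt_top (hν : IsBlaschke ν) (hp : 1 ≤ p)
    (hr : 1 / 2 ≤ r) (hr1 : r < 1) : circleNorm p r (greenPotential ν) < ∞ := by
  refine (hν.circleNorm_greenPotential_le hp hr hr1).trans_lt (ENNReal.mul_lt_top (by simp) ?_)
  refine (lintegral_mono fun ζ => ?_).trans_lt hν.lintegral_ne_top.lt_top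
  exact ENNReal.ofReal_le_ofReal (min_le_right _ _)

end Potential

section GrowthRates

theorem isBigO_nhdsLT_one_iff {f : ℝ → ℝ} {e : ℝ} (hf : ∀ r, 0 ≤ f r) :
    f =O[𝓝[<] 1] (fun r => (1 - r) ^ e) ↔
      ∃ C : ℝ, ∃ r₀ ∈ Ico (0 : ℝ) 1, ∀ r ∈ Ioo r₀ 1, f r ≤ C * (1 - r) ^ e := by
  have hnorm {r : ℝ} (hr : r < 1) : ‖(1 - r) ^ e‖ = (1 - r) ^ e :=
    Real.norm_of_nonneg (Real.rpow_nonneg (sub_pos.2 hr).le e)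
  constructor
  · intro h
    obtain ⟨C, hC⟩ := h.bound
    obtain ⟨r₀, hr₀, hsub⟩ := (mem_nhdsLT_iff_exists_mem_Ico_Ioo_subset one_pos).1 hC
    refine ⟨C, r₀, hr₀, fun r hr => ?_⟩
    have hbound : ‖f r‖ ≤ C * ‖(1 - r) ^ e‖ := hsub hr
    rwa [Real.norm_of_nonneg (hf r), hnorm hr.2] at hbound
  · rintro ⟨C, r₀, hr₀, hC⟩
    refine .of_bound C ?_
    filter_upwards [Ioo_mem_nhdsLT hr₀.2] with r hr
    rw [Real.norm_of_nonneg (hf r), hnorm hr.2]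
    exact hC r hr

theorem isBigO_comp_one_sub_iff {f : ℝ → ℝ} {e : ℝ} :
    (fun s => f (1 - s)) =O[𝓝[>] 0] (fun s => s ^ e) ↔
      f =O[𝓝[<] 1] fun r => (1 - r) ^ e := by
  have hmap : 𝓝[<] (1 : ℝ) = map (fun s => 1 - s) (𝓝[>] 0) := by
    simp
  rw [hmap, isBigO_map]
  simp only [Function.comp_def, sub_sub_cancel]

theorem isBigO_comp_div_rpow {f : ℝ → ℝ} {a e : ℝ} (ha : 0 < a)
    (h : f =O[𝓝[>] 0] fun s => s ^ e) : (fun s => f (s / a)) =O[𝓝[>] 0] fun s => s ^ e := by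
  have hdiv : Tendsto (fun s => s / a) (𝓝[>] 0) (𝓝[>] 0) := by
    refine tendsto_nhdsWithin_iff.2 ⟨?_, ?_⟩
    · simpa using (tendsto_id.div_const a).mono_left (nhdsWithin_le_nhds (a := (0 : ℝ)))
    · filter_upwards [self_mem_nhdsWithin] with s hs using div_pos hs ha
  calc (fun s => f (s / a)) =O[𝓝[>] 0] fun s => (s / a) ^ e := h.comp_tendsto hdiv
    _ =ᶠ[𝓝[>] 0] fun s => (a ^ e)⁻¹ * s ^ e := by
      filter_upwards [self_mem_nhdsWithin] with s hs
      rw [Real.div_rpow (mem_Ioi.1 hs).le ha.le, div_eq_inv_mul]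
    _ =O[𝓝[>] 0] fun s => s ^ e := isBigO_const_mul_self _ _ _

theorem le_mul_rpow_neg_of_le_add {f : ℝ → ℝ} {β A C s₀ : ℝ}
    (hbase : ∀ s ∈ Ico s₀ (2 * s₀), f s ≤ A * s ^ (-β))
    (hrec : ∀ s ∈ Ioo 0 s₀, f s ≤ f (2 * s) + C * s ^ (-β))
    (hAC : A * 2 ^ (-β) + C ≤ A) :
    ∀ s ∈ Ioo 0 (2 * s₀), f s ≤ A * s ^ (-β) := by
  have hdyadic (k : ℕ) : ∀ s ∈ Ioo 0 (2 * s₀), s₀ ≤ 2 ^ k * s → f s ≤ A * s ^ (-β) := by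
    induction k with
    | zero => exact fun s hs hks => hbase s ⟨by simpa using hks, hs.2⟩
    | succ k ih =>
      intro s hs hks
      rcases le_or_gt s₀ s with hle | hlt
      · exact hbase s ⟨hle, hs.2⟩
      · have hdouble :=
          ih (2 * s) ⟨by linarith [hs.1], by linarith⟩ (by rwa [← mul_assoc, ← pow_succ])
        calc f s ≤ f (2 * s) + C * s ^ (-β) := hrec s ⟨hs.1, hlt⟩
          _ ≤ A * (2 * s) ^ (-β) + C * s ^ (-β) := by gcongr
          _ = (A * 2 ^ (-β) + C) * s ^ (-β) := by rw [Real.mul_rpow zero_le_two hs.1.le]; ring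
          _ ≤ A * s ^ (-β) := mul_le_mul_of_nonneg_right hAC (Real.rpow_nonneg hs.1.le _)
  intro s hs
  obtain ⟨k, hk⟩ := pow_unbounded_of_one_lt (s₀ / s) one_lt_two
  exact hdyadic k s hs ((div_lt_iff₀ hs.1).1 hk).le

theorem isBigO_rpow_neg_of_le_add {f g : ℝ → ℝ} {β : ℝ} (hβ : 0 < β) (hf : ∀ s, 0 ≤ f s)
    (hanti : AntitoneOn f (Ioi 0)) (hrec : ∀ s > 0, f s ≤ f (2 * s) + g s)
    (hg : g =O[𝓝[>] 0] fun s => s ^ (-β)) :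
    f =O[𝓝[>] 0] fun s => s ^ (-β) := by
  obtain ⟨C, hC, hbound⟩ := hg.exists_nonneg
  obtain ⟨s₀, hs₀, hsub⟩ := mem_nhdsGT_iff_exists_Ioo_subset.1 hbound.bound
  rw [mem_Ioi] at hs₀
  have hratio : 0 < 1 - (2 : ℝ) ^ (-β) :=
    sub_pos.2 (Real.rpow_lt_one_of_one_lt_of_neg one_lt_two (neg_neg_of_pos hβ))
  set A := f s₀ * (2 * s₀) ^ β + C / (1 - 2 ^ (-β))
  have hfs₀ := hf s₀
  have hbase : ∀ s ∈ Ico s₀ (2 * s₀), f s ≤ A * s ^ (-β) := fun s hs => by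
    have hs_pos : 0 < s := hs₀.trans_le hs.1
    calc f s ≤ f s₀ := hanti hs₀ hs_pos hs.1
      _ = f s₀ * (2 * s₀) ^ β * (2 * s₀) ^ (-β) := by
        rw [mul_assoc, ← Real.rpow_add (by positivity), add_neg_cancel, Real.rpow_zero, mul_one]
      _ ≤ A * s ^ (-β) := by
        have := Real.rpow_le_rpow_of_nonpos hs_pos hs.2.le (neg_nonpos.2 hβ.le)
        gcongr
        exact le_add_of_nonneg_right (by positivity)
  have hrec' : ∀ s ∈ Ioo 0 s₀, f s ≤ f (2 * s) + C * s ^ (-β) := fun s hs => by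
    have hgs : ‖g s‖ ≤ C * ‖s ^ (-β)‖ := hsub hs
    rw [Real.norm_of_nonneg (Real.rpow_nonneg hs.1.le _)] at hgs
    linarith [hrec s hs.1, Real.le_norm_self (g s)]
  have hAC : A * 2 ^ (-β) + C ≤ A := by
    have : C / (1 - 2 ^ (-β)) * (1 - 2 ^ (-β)) = C := div_mul_cancel₀ C hratio.ne'
    have : 0 ≤ f s₀ * (2 * s₀) ^ β * (1 - 2 ^ (-β)) := by positivity
    linarith
  refine .of_bound A ?_
  filter_upwards [Ioo_mem_nhdsGT (by positivity : 0 < 2 * s₀)] with s hs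
  rw [Real.norm_of_nonneg (hf s), Real.norm_of_nonneg (Real.rpow_nonneg hs.1.le _)]
  exact le_mul_rpow_neg_of_le_add hbase hrec' hAC s hs

end GrowthRates

section Stolz

/-- The Stolz angle with vertex `v` and aperture constant `c`. -/
def stolzAngle (v : ℂ) (c : ℝ) : Set ℂ :=
  {z | ‖v - z‖ ≤ c * (1 - ‖z‖)}

/-- The part of a Stolz angle at distance between `2 * s` and `4 * s` from the unit circle. Its
mass is detected by the potential on the circle of radius `1 - s`, which stays clear of it. -/
def stolzAnnulus (v : ℂ) (c s : ℝ) : Set ℂ :=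
  stolzAngle v c ∩ {ζ | 1 - ‖ζ‖ ∈ Icc (2 * s) (4 * s)}

/-- A lower bound for the Green function with pole in a Stolz annulus, near the vertex. -/
noncomputable def stolzConst (c : ℝ) : ℝ :=
  1 / 2 * Real.log (1 + 2 / (2 + 4 * |c|) ^ 2)

theorem stolzConst_pos (c : ℝ) : 0 < stolzConst c :=
  mul_pos one_half_pos (Real.log_pos (lt_add_of_pos_right 1 (by positivity)))

variable {ν : Measure ℂ} {p r e c : ℝ} {v : ℂ}

theorem measurableSet_stolzAnnulus (v : ℂ) (c s : ℝ) : MeasurableSet (stolzAnnulus v c s) :=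
  (measurableSet_le (by fun_prop) (by fun_prop)).inter
    (measurableSet_Icc.preimage (by fun_prop))

theorem stolzAnnulus_subset_closedBall (v : ℂ) (c s : ℝ) :
    stolzAnnulus v c s ⊆ closedBall 0 (1 - 2 * s) := fun _ hζ =>
  mem_closedBall_zero_iff.2 (by linarith [hζ.2.1])

theorem norm_circleMap_zero_sub_le (hv : ‖v‖ = 1) (hr : 0 ≤ r) (hr1 : r ≤ 1) (θ : ℝ) :
    ‖circleMap 0 r θ - v‖ ≤ |θ - v.arg| + (1 - r) := by
  have hangular : ‖circleMap 0 r θ - circleMap 0 r v.arg‖ ≤ |θ - v.arg| := by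
    have hchord := norm_circleMap_zero_sub_circleMap_zero r v.arg (θ - v.arg)
    rw [add_sub_cancel, abs_of_nonneg hr] at hchord
    calc ‖circleMap 0 r θ - circleMap 0 r v.arg‖ = 2 * r * |Real.sin ((θ - v.arg) / 2)| := hchord
      _ ≤ 2 * 1 * |(θ - v.arg) / 2| := by gcongr 2 * ?_ * ?_; exact Real.abs_sin_le_abs
      _ = |θ - v.arg| := by rw [abs_div, abs_two]; ring
  have hradial : ‖circleMap 0 r v.arg - v‖ ≤ 1 - r := by
    have hrv : ‖(r : ℂ) * v‖ = r := by rw [norm_mul, hv, mul_one, norm_real, Real.norm_of_nonneg hr]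
    refine (norm_circleMap_zero_arg_sub_le hrv).trans_eq ?_
    rw [← sub_one_mul, norm_mul, hv, mul_one, norm_sub_rev, ← ofReal_one, ← ofReal_sub,
      norm_real, Real.norm_of_nonneg (sub_nonneg.2 hr1)]
  linarith [norm_sub_le_norm_sub_add_norm_sub (circleMap 0 r θ) (circleMap 0 r v.arg) v]

theorem stolzConst_le_greenKernel {z ζ : ℂ} (hr1 : r < 1) (hz : ‖z‖ = r)
    (hzv : ‖z - v‖ ≤ 2 * (1 - r)) (hζ : ζ ∈ stolzAnnulus v c (1 - r)) :
    stolzConst c ≤ greenKernel z ζ := by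
  obtain ⟨hangle, hnear, hfar⟩ := hζ
  have hζ1 : ‖ζ‖ < 1 := by linarith
  refine log_le_greenKernel (hz.trans_lt hr1) hζ1 (by rwa [hz]) ?_
  calc ‖z - ζ‖ ≤ ‖z - v‖ + ‖v - ζ‖ := norm_sub_le_norm_sub_add_norm_sub z v ζ
    _ ≤ 2 * (1 - r) + |c| * (4 * (1 - r)) := by
      refine add_le_add hzv (le_trans hangle ?_)
      gcongr ?_ * ?_
      exact le_abs_self c
    _ = (2 + 4 * |c|) * (1 - ‖z‖) := by rw [hz]; ring

theorem measure_stolzAnnulus_le_greenPotential (hv : ‖v‖ = 1) (hr : 0 ≤ r) (hr1 : r < 1) {θ : ℝ}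
    (hθ : θ ∈ Ioc v.arg (v.arg + (1 - r))) :
    ENNReal.ofReal (stolzConst c) * ν (stolzAnnulus v c (1 - r)) ≤
      greenPotential ν (circleMap 0 r θ) := by
  have hnorm : ‖circleMap 0 r θ‖ = r := by rw [norm_circleMap_zero, abs_of_nonneg hr]
  have hclose : ‖circleMap 0 r θ - v‖ ≤ 2 * (1 - r) := by
    have harc : |θ - v.arg| ≤ 1 - r := abs_le.2 ⟨by linarith [hθ.1], by linarith [hθ.2]⟩
    linarith [norm_circleMap_zero_sub_le hv hr hr1.le θ]
  calc ENNReal.ofReal (stolzConst c) * ν (stolzAnnulus v c (1 - r))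
      = ∫⁻ _ in stolzAnnulus v c (1 - r), ENNReal.ofReal (stolzConst c) ∂ν :=
        (setLIntegral_const _ _).symm
    _ ≤ ∫⁻ ζ in stolzAnnulus v c (1 - r), ENNReal.ofReal (greenKernel (circleMap 0 r θ) ζ) ∂ν :=
        setLIntegral_mono' (measurableSet_stolzAnnulus v c _) fun ζ hζ =>
          ENNReal.ofReal_le_ofReal (stolzConst_le_greenKernel hr1 hnorm hclose hζ)
    _ ≤ greenPotential ν (circleMap 0 r θ) := setLIntegral_le_lintegral _ _

theorem measure_stolzAnnulus_le_circleNorm (hp : 0 < p) (hv : ‖v‖ = 1) (hr : 0 ≤ r)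
    (hr1 : r < 1) :
    ENNReal.ofReal (1 - r) ^ (1 / p) *
        (ENNReal.ofReal (stolzConst c) * ν (stolzAnnulus v c (1 - r))) ≤
      circleNorm p r (greenPotential ν) :=
  ofReal_rpow_mul_le_circleNorm hp (by linarith [Real.pi_gt_three]) fun _ hθ =>
    measure_stolzAnnulus_le_greenPotential hv hr hr1 hθ

theorem IsBlaschke.isBigO_measureReal_stolzAnnulus (hν : IsBlaschke ν) (hp : 1 ≤ p)
    (hv : ‖v‖ = 1)
    (h : (fun r => (circleNorm p r (greenPotential ν)).toReal) =O[𝓝[<] 1]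
      fun r => (1 - r) ^ e) :
    (fun s => ν.real (stolzAnnulus v c s)) =O[𝓝[>] 0] fun s => s ^ (e - 1 / p) := by
  suffices hr : (fun r => ν.real (stolzAnnulus v c (1 - r))) =O[𝓝[<] 1]
      fun r => (1 - r) ^ (e - 1 / p) by
    simpa only [sub_sub_cancel] using isBigO_comp_one_sub_iff.2 hr
  obtain ⟨C, r₀, hr₀, hC⟩ := (isBigO_nhdsLT_one_iff fun r => ENNReal.toReal_nonneg).1 h
  refine (isBigO_nhdsLT_one_iff fun r => measureReal_nonneg).2
    ⟨C / stolzConst c, max (1 / 2) r₀, ⟨by positivity, max_lt one_half_lt_one hr₀.2⟩,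
      fun r hr => ?_⟩
  obtain ⟨hhalf, hr₀r⟩ := max_lt_iff.1 hr.1
  have hd : 0 < 1 - r := sub_pos.2 hr.2
  have hκ := stolzConst_pos c
  have hlower : (1 - r) ^ (1 / p) * (stolzConst c * ν.real (stolzAnnulus v c (1 - r))) ≤
      (circleNorm p r (greenPotential ν)).toReal := by
    have := ENNReal.toReal_mono (hν.circleNorm_greenPotential_lt_top hp hhalf.le hr.2).ne
      (measure_stolzAnnulus_le_circleNorm (c := c) (by positivity) hv (by linarith) hr.2)
    rwa [ENNReal.toReal_mul, ENNReal.toReal_mul, ← ENNReal.toReal_rpow,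
      ENNReal.toReal_ofReal hd.le, ENNReal.toReal_ofReal hκ.le] at this
  rw [Real.rpow_sub hd, div_mul_div_comm, le_div_iff₀ (by positivity)]
  linarith [hC r ⟨hr₀r, hr.2⟩]

theorem IsBlaschke.antitoneOn_measureReal_closedBall (hν : IsBlaschke ν) :
    AntitoneOn (fun s => ν.real (closedBall 0 (1 - s))) (Ioi 0) := fun s hs t _ hst =>
  measureReal_mono (closedBall_subset_closedBall (by linarith))
    (hν.measure_closedBall_lt_top (sub_lt_self 1 hs)).ne

theorem IsBlaschke.measureReal_closedBall_le_add_sum {ι : Type*} [Fintype ι] (hν : IsBlaschke ν)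
    {v : ι → ℂ} (hsupp : ν (⋃ j, stolzAngle (v j) c)ᶜ = 0) {s : ℝ} (hs : 0 < s) :
    ν.real (closedBall 0 (1 - s)) ≤
      ν.real (closedBall 0 (1 - 2 * s)) + ∑ j, ν.real (stolzAnnulus (v j) c (s / 2)) := by
  have hsub : (closedBall 0 (1 - s) : Set ℂ) ≤ᵐ[ν]
      (closedBall 0 (1 - 2 * s) ∪ ⋃ j, stolzAnnulus (v j) c (s / 2) : Set ℂ) := by
    have hmem : ∀ᵐ ζ ∂ν, ζ ∈ ⋃ j, stolzAngle (v j) c := hsupp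
    filter_upwards [hmem] with ζ hζ hball
    obtain ⟨j, hj⟩ := mem_iUnion.1 hζ
    have hball : ‖ζ‖ ≤ 1 - s := mem_closedBall_zero_iff.1 hball
    rcases le_or_gt ‖ζ‖ (1 - 2 * s) with hle | hlt
    · exact .inl (mem_closedBall_zero_iff.2 hle)
    · exact .inr (mem_iUnion.2 ⟨j, hj, by linarith, by linarith⟩)
  have hfin : ν (closedBall 0 (1 - 2 * s) ∪ ⋃ j, stolzAnnulus (v j) c (s / 2)) ≠ ∞ := by
    refine measure_ne_top_of_subset (union_subset ?_ (iUnion_subset fun j => ?_))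
      (hν.measure_closedBall_lt_top (sub_lt_self 1 hs)).ne
    · exact closedBall_subset_closedBall (by linarith)
    · exact (stolzAnnulus_subset_closedBall (v j) c _).trans
        (closedBall_subset_closedBall (by linarith))
  calc ν.real (closedBall 0 (1 - s))
      ≤ ν.real (closedBall 0 (1 - 2 * s) ∪ ⋃ j, stolzAnnulus (v j) c (s / 2)) :=
        ENNReal.toReal_mono hfin (measure_mono_ae hsub)
    _ ≤ ν.real (closedBall 0 (1 - 2 * s)) + ν.real (⋃ j, stolzAnnulus (v j) c (s / 2)) :=
        measureReal_union_le _ _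
    _ ≤ ν.real (closedBall 0 (1 - 2 * s)) + ∑ j, ν.real (stolzAnnulus (v j) c (s / 2)) := by
        gcongr
        exact measureReal_iUnion_fintype_le _

theorem IsBlaschke.isBigO_measureReal_closedBall {ι : Type*} [Finite ι] (hν : IsBlaschke ν)
    (hp : 1 ≤ p) {v : ι → ℂ} (hv : ∀ j, ‖v j‖ = 1)
    (hsupp : ν (⋃ j, stolzAngle (v j) c)ᶜ = 0) (he : e < 1 / p)
    (h : (fun r => (circleNorm p r (greenPotential ν)).toReal) =O[𝓝[<] 1]
      fun r => (1 - r) ^ e) :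
    (fun r => ν.real (closedBall 0 r)) =O[𝓝[<] 1] fun r => (1 - r) ^ (e - 1 / p) := by
  cases nonempty_fintype ι
  have hannuli : (fun s => ∑ j, ν.real (stolzAnnulus (v j) c (s / 2))) =O[𝓝[>] 0]
      fun s => s ^ (e - 1 / p) := .fun_sum fun j _ =>
    isBigO_comp_div_rpow two_pos (hν.isBigO_measureReal_stolzAnnulus hp (hv j) h)
  rw [← isBigO_comp_one_sub_iff]
  rw [← neg_sub (1 / p) e] at hannuli ⊢
  exact isBigO_rpow_neg_of_le_add (sub_pos.2 he) (fun s => measureReal_nonneg)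
    hν.antitoneOn_measureReal_closedBall
    (fun s hs => hν.measureReal_closedBall_le_add_sum hsupp hs) hannuli

end Stolz

section Counting

variable {ν : Measure ℂ} {p β : ℝ}

theorem IsBlaschke.lintegral_min_le (hν : IsBlaschke ν) {C d : ℝ} (hC : 0 ≤ C) (hβ : β < 1)
    (hd : 0 ≤ d) (hcount : ∀ s ∈ Ioc 0 d, ν.real (closedBall 0 (1 - s)) ≤ C * s ^ (-β)) :
    ∫⁻ ζ, ENNReal.ofReal (min d (1 - ‖ζ‖)) ∂ν ≤ ENNReal.ofReal (C * d ^ (1 - β) / (1 - β)) := by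
  rw [lintegral_min_one_sub_norm hν.ae_norm_lt_one hd, ← lintegral_Ioc_ofReal_mul_rpow hC hβ hd]
  refine setLIntegral_mono' measurableSet_Ioc fun s hs => ?_
  rw [← ofReal_measureReal (hν.measure_closedBall_lt_top (sub_lt_self 1 hs.1)).ne]
  exact ENNReal.ofReal_le_ofReal (hcount s hs)

theorem IsBlaschke.isBigO_circleNorm_greenPotential (hν : IsBlaschke ν) (hp : 1 ≤ p) (hβ : β < 1)
    (h : (fun r => ν.real (closedBall 0 r)) =O[𝓝[<] 1] fun r => (1 - r) ^ (-β)) :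
    (fun r => (circleNorm p r (greenPotential ν)).toReal) =O[𝓝[<] 1]
      fun r => (1 - r) ^ (1 / p - β) := by
  obtain ⟨C, r₀, hr₀, hC⟩ := (isBigO_nhdsLT_one_iff fun r => measureReal_nonneg).1 h
  refine (isBigO_nhdsLT_one_iff fun r => ENNReal.toReal_nonneg).2
    ⟨kernelConst p * (C / (1 - β)), max (1 / 2) r₀,
      ⟨by positivity, max_lt one_half_lt_one hr₀.2⟩, fun r hr => ?_⟩
  obtain ⟨hhalf, hr₀r⟩ := max_lt_iff.1 hr.1
  have hd : 0 < 1 - r := sub_pos.2 hr.2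
  have hβ' : 0 < 1 - β := sub_pos.2 hβ
  have hC_nonneg : 0 ≤ C :=
    nonneg_of_mul_nonneg_left (measureReal_nonneg.trans (hC r ⟨hr₀r, hr.2⟩)) (by positivity)
  have hmass := hν.lintegral_min_le hC_nonneg hβ hd.le fun s hs => by
    simpa only [sub_sub_cancel] using hC (1 - s) ⟨by linarith [hs.2], by linarith [hs.1]⟩
  have hK := kernelConst_nonneg p
  refine ENNReal.toReal_le_of_le_ofReal (by positivity) ?_
  calc circleNorm p r (greenPotential ν)
      ≤ ENNReal.ofReal (kernelConst p * (1 - r) ^ (1 / p - 1)) *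
          ∫⁻ ζ, ENNReal.ofReal (min (1 - r) (1 - ‖ζ‖)) ∂ν :=
        hν.circleNorm_greenPotential_le hp hhalf.le hr.2
    _ ≤ ENNReal.ofReal (kernelConst p * (1 - r) ^ (1 / p - 1)) *
          ENNReal.ofReal (C * (1 - r) ^ (1 - β) / (1 - β)) := by gcongr
    _ = ENNReal.ofReal (kernelConst p * (C / (1 - β)) * (1 - r) ^ (1 / p - β)) := by
        rw [← ENNReal.ofReal_mul (by positivity), ← sub_add_sub_cancel (1 / p) 1 β,
          Real.rpow_add hd]
        congr 1
        ring

end Counting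

theorem IsBlaschke.isBigO_mpMean_iff {ν : Measure ℂ} (hν : IsBlaschke ν) {p : ℝ} (hp : 1 ≤ p)
    {u : ℂ → ℝ}
    (hu : ∀ z ∈ ball (0 : ℂ) 1, u z = ∫ ζ, Real.log (‖z - ζ‖ / ‖1 - z * conj ζ‖) ∂ν)
    {g : ℝ → ℝ} :
    (fun r => mpMean p r u) =O[𝓝[<] 1] g ↔
      (fun r => (circleNorm p r (greenPotential ν)).toReal) =O[𝓝[<] 1] g := by
  have := hν.sFinite
  have heq : (fun r => mpMean p r u) =ᶠ[𝓝[<] 1]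
      fun r => (1 / (2 * π)) ^ (1 / p) * (circleNorm p r (greenPotential ν)).toReal := by
    filter_upwards [Ioo_mem_nhdsLT one_half_lt_one] with r hr
    refine mpMean_eq_mul_toReal_circleNorm (by positivity) measurable_greenPotential (fun θ => ?_)
      (hν.circleNorm_greenPotential_lt_top hp hr.1.le hr.2).ne
    have hz : ‖circleMap 0 r θ‖ < 1 := by
      rw [norm_circleMap_zero, abs_of_pos (one_half_pos.trans hr.1)]
      exact hr.2
    rw [hu _ (mem_ball_zero_iff.2 hz), hν.abs_integral_log_eq hz]
  rw [isBigO_congr heq .rfl, isBigO_const_mul_left_iff (by positivity)]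

theorem stmt2_general {ι : Type*} [Finite ι] (u : ℂ → ℝ) (μ : Measure ℂ) (α p : ℝ)
    (hα : -(1 / p) < α) (hp : 1 ≤ p) (hαp : α + 1 / p < 1) (hμD : μ (ball (0 : ℂ) 1)ᶜ = 0)
    (hμfin : ∫⁻ ζ in ball (0 : ℂ) 1, ENNReal.ofReal (1 - ‖ζ‖) ∂μ < ∞)
    (hrep : ∀ z ∈ ball (0 : ℂ) 1,
      u z = ∫ ζ in ball (0 : ℂ) 1, Real.log (‖z - ζ‖ / ‖1 - z * conj ζ‖) ∂μ)
    (v : ι → ℂ) (hv : ∀ j, ‖v j‖ = 1) (c : ℝ)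
    (hsupp : μ (⋃ j, stolzAngle (v j) c)ᶜ = 0) :
    (fun r => mpMean p r u) =O[𝓝[<] 1] (fun r => (1 - r) ^ (-α)) ↔
      (fun r => μ.real (closedBall 0 r)) =O[𝓝[<] 1] fun r => (1 - r) ^ (-α - 1 / p) := by
  have hball : ∀ᵐ ζ ∂μ, ζ ∈ ball (0 : ℂ) 1 := hμD
  rw [Measure.restrict_eq_self_of_ae_mem hball] at hμfin hrep
  have hμ : IsBlaschke μ := ⟨hball.mono fun ζ => mem_ball_zero_iff.1, hμfin.ne⟩
  rw [hμ.isBigO_mpMean_iff hp hrep]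
  refine ⟨hμ.isBigO_measureReal_closedBall hp hv hsupp (by linarith), fun h => ?_⟩
  rw [← neg_add'] at h
  simpa only [sub_add_cancel_right] using hμ.isBigO_circleNorm_greenPotential hp hαp h

/-- For a Green potential `u(z) = ∫_𝔻 log(|z-ζ|/|1-z·conj ζ|) dμ(ζ)`
whose Riesz measure `μ` is supported in a finite union of Stolz angles with
vertices on `∂𝔻`, with `α ∈ [0,1)`, `p ∈ (1,∞)`, `α + 1/p < 1`:
`m_p(r,u) = O((1-r)^{-α})` as `r ↑ 1` iff
`n(r,u) = μ(closedBall 0 r) = O((1-r)^{-α-1/p})` as `r ↑ 1`. -/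
theorem stmt2 (u : ℂ → ℝ) (μ : Measure ℂ) (α p : ℝ) (hα0 : 0 ≤ α) (hα1 : α < 1)
    (hp : 1 < p) (hαp : α + 1 / p < 1)
    -- `μ` is a positive Borel measure on `𝔻` with `∫_𝔻 (1-|ζ|) dμ(ζ) < ∞`
    (hμD : μ (Metric.ball (0 : ℂ) 1)ᶜ = 0)
    (hμfin : ∫⁻ ζ in Metric.ball (0 : ℂ) 1, ENNReal.ofReal (1 - ‖ζ‖) ∂μ < ⊤)
    -- `u` is the Green potential of `μ`
    (hrep : ∀ z ∈ Metric.ball (0 : ℂ) 1,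
      u z = ∫ ζ in Metric.ball (0 : ℂ) 1,
        Real.log (‖z - ζ‖ / ‖1 - z * (starRingEnd ℂ) ζ‖) ∂μ)
    -- `supp μ` is contained in a finite union of Stolz angles with vertices on `∂𝔻`
    (N : ℕ) (ζs : Fin N → ℂ) (hζs : ∀ j, ‖ζs j‖ = 1) (c : ℝ) (hc : 1 ≤ c)
    (hsupp : μ (⋃ j, {z : ℂ | ‖ζs j - z‖ ≤ c * (1 - ‖z‖)})ᶜ = 0) :
    (∃ C₁ : ℝ, ∃ r₀ ∈ Set.Ico (0 : ℝ) 1, ∀ r ∈ Set.Ioo r₀ 1,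
        mpMean p r u ≤ C₁ * (1 - r) ^ (-α)) ↔
      (∃ C₂ : ℝ, ∃ r₀ ∈ Set.Ico (0 : ℝ) 1, ∀ r ∈ Set.Ioo r₀ 1,
        (μ (Metric.closedBall (0 : ℂ) r)).toReal ≤ C₂ * (1 - r) ^ (-α - 1 / p)) := by
  rw [← isBigO_nhdsLT_one_iff fun r => mpMean_nonneg p r u,
    ← isBigO_nhdsLT_one_iff fun r => ENNReal.toReal_nonneg]
  have hα : -(1 / p) < α := (neg_neg_of_pos (by positivity)).trans_le hα0
  exact stmt2_general u μ α p hα hp.le hαp hμD hμfin hrep ζs hζs c hsupp
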